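/- Let M be a finitely generated inverse permutable monoid. Then 𝔏_Rat(M) equals the class of regular languages if and only if every finitely generated subgroup of M is periodic. -/

import Mathlib

open scoped Pointwise

/-- A semigroup/monoid `M` is `n`-permutable: for every sequence of `n` elements there is a
non-identity permutation `σ` of `{1,…,n}` leaving the product unchanged. -/
def NPermutable (M : Type) [Monoid M] (n : ℕ) : Prop :=
  ∀ s : Fin n → M, ∃ σ : Equiv.Perm (Fin n), σ ≠ 1 ∧
    (List.ofFn s).prod = (List.ofFn fun i => s (σ i)).prod

/-- `M` is permutable if it is `n`-permutable for some `n ≥ 2`. -/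
def Permutable (M : Type) [Monoid M] : Prop :=
  ∃ n : ℕ, 2 ≤ n ∧ NPermutable M n

/-- `M` is an inverse monoid: every element has a unique inverse in the sense of
inverse semigroup theory. -/
def IsInverseMonoid (M : Type) [Monoid M] : Prop :=
  ∀ m : M, ∃! m' : M, m * m' * m = m ∧ m' * m * m' = m'

/-- The rational subsets of a monoid: the closure of the finite subsets under
union, (pointwise) product and Kleene star (i.e. generated submonoid). -/
inductive IsRatSet {M : Type} [Monoid M] : Set M → Prop
  | of_finite (S : Set M) : S.Finite → IsRatSet S
  | union (S T : Set M) : IsRatSet S → IsRatSet T → IsRatSet (S ∪ T)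
  | mul (S T : Set M) : IsRatSet S → IsRatSet T → IsRatSet (S * T)
  | star (S : Set M) : IsRatSet S → IsRatSet (Submonoid.closure S : Set M)

/-- A rational monoid automaton over `M` with input alphabet `α`: a nondeterministic
finite automaton whose transitions (on letters or on `ε`, encoded by `none`) are labeled
by elements of `M`, together with rational initial and terminal sets `I0, I1 ⊆ M`. -/
structure RatMonoidAutomaton (α : Type) (M : Type) [Monoid M] where
  Q : Type
  fintypeQ : Fintype Q
  start : Q
  accept : Set Q
  step : Q → Option α → Set (Q × M)
  I0 : Set M
  I1 : Set M
  ratI0 : IsRatSet I0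
  ratI1 : IsRatSet I1

namespace RatMonoidAutomaton

variable {α M : Type} [Monoid M]

/-- `A.Reaches q w m q'` holds if there is a computation of `A` from state `q` to state `q'`
reading the word `w` (with `ε`-moves allowed) whose product of labels is `m`. -/
inductive Reaches (A : RatMonoidAutomaton α M) : A.Q → List α → M → A.Q → Prop
  | refl (q : A.Q) : Reaches A q [] 1 q
  | letter {q q' q'' : A.Q} {a : α} {w : List α} {m m' : M} :
      (q', m) ∈ A.step q (some a) → Reaches A q' w m' q'' →
      Reaches A q (a :: w) (m * m') q''
  | eps {q q' q'' : A.Q} {w : List α} {m m' : M} :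
      (q', m) ∈ A.step q none → Reaches A q' w m' q'' →
      Reaches A q w (m * m') q''

/-- The language accepted by a rational monoid automaton: `w` is accepted if some
computation on `w` from the initial state to an accepting state has label product `x`
with `x₀ * x ∈ I1` for some `x₀ ∈ I0`. -/
def lang (A : RatMonoidAutomaton α M) : Language α :=
  { w | ∃ q ∈ A.accept, ∃ m : M, A.Reaches A.start w m q ∧ ∃ x0 ∈ A.I0, x0 * m ∈ A.I1 }

end RatMonoidAutomaton

/-- `𝔏_Rat(M)`: the family of languages over the alphabet `α` accepted by rational
monoid automata over `M`. -/
def LRat (α : Type) (M : Type) [Monoid M] : Set (Language α) :=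
  { L | ∃ A : RatMonoidAutomaton α M, A.lang = L }

/-- A subsemigroup `S` of a monoid `M` is a subgroup of `M` if it is a group under the
induced operation (its identity need not be the identity of `M`). -/
def IsSubgroupOfMonoid {M : Type} [Monoid M] (S : Subsemigroup M) : Prop :=
  ∃ e ∈ S, (∀ x ∈ S, e * x = x ∧ x * e = x) ∧ ∀ x ∈ S, ∃ y ∈ S, x * y = e ∧ y * x = e

/-- A subsemigroup is finitely generated if it is the closure of a finite subset. -/
def SubsemigroupFG {M : Type} [Monoid M] (S : Subsemigroup M) : Prop :=
  ∃ T : Finset M, Subsemigroup.closure (T : Set M) = S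

/-- An element `s` is periodic if `s^i = s^j` for some `1 ≤ i < j`. -/
def IsPeriodicElem {M : Type} [Monoid M] (s : M) : Prop :=
  ∃ i j : ℕ, 1 ≤ i ∧ i < j ∧ s ^ i = s ^ j


section InvPart

variable {M : Type} [Monoid M]

theorem im_idem_comm (hinv : IsInverseMonoid M) {e f : M} (he : e * e = e) (hf : f * f = f) :
    e * f = f * e := by
  have uniq : ∀ a b c : M, a * b * a = a → b * a * b = b → a * c * a = a → c * a * c = c →
      b = c := fun a b c h1 h2 h3 h4 => (hinv a).unique ⟨h1, h2⟩ ⟨h3, h4⟩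
  have idem : ∀ e f : M, e * e = e → f * f = f → (e * f) * (e * f) = e * f := by
    intro e f he hf
    obtain ⟨g, ⟨h1, h2⟩, -⟩ := hinv (e * f)
    have hg : g = f * g * e := by
      apply uniq (e * f) _ _ h1 h2
      · calc e * f * (f * g * e) * (e * f) = e * (f * f) * g * (e * e) * f := by
              simp only [mul_assoc]
          _ = e * f * g * (e * f) := by rw [he, hf]; simp only [mul_assoc]
          _ = e * f := h1
      · calc f * g * e * (e * f) * (f * g * e) = f * (g * ((e * e) * (f * f)) * g) * e := by
              simp only [mul_assoc]
          _ = f * g * e := by rw [he, hf, h2]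
    have hgg : g * g = g := by
      calc g * g = (f * g * e) * (f * g * e) := by rw [← hg]
        _ = f * (g * (e * f) * g) * e := by simp only [mul_assoc]
        _ = g := by rw [h2, ← hg]
    have : e * f = g := uniq g (e * f) g h2 h1 (by rw [hgg, hgg]) (by rw [hgg, hgg])
    rw [this, hgg]
  have h1 := idem e f he hf
  have h2 := idem f e hf he
  apply uniq (e * f) (e * f) (f * e)
  · rw [h1, h1]
  · rw [h1, h1]
  · calc e * f * (f * e) * (e * f) = e * (f * f) * (e * e) * f := by simp only [mul_assoc]
      _ = e * f * (e * f) := by rw [he, hf]; simp only [mul_assoc]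
      _ = e * f := h1
  · calc f * e * (e * f) * (f * e) = f * (e * e) * (f * f) * e := by simp only [mul_assoc]
      _ = f * e * (f * e) := by rw [he, hf]; simp only [mul_assoc]
      _ = f * e := h2

theorem im_pow_inv (hinv : IsInverseMonoid M) {x y : M} (h1 : x * y * x = x)
    (h2 : y * x * y = y) (n : ℕ) :
    x ^ n * y ^ n * x ^ n = x ^ n ∧ y ^ n * x ^ n * y ^ n = y ^ n := by
  induction n with
  | zero => simp
  | succ n ih =>
    obtain ⟨i1, i2⟩ := ih
    have hc : (x ^ n * y ^ n) * (y * x) = (y * x) * (x ^ n * y ^ n) := by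
      apply im_idem_comm hinv
      · rw [← mul_assoc, i1]
      · rw [← mul_assoc, h2]
    have hc' : (y ^ n * x ^ n) * (x * y) = (x * y) * (y ^ n * x ^ n) := by
      apply im_idem_comm hinv
      · rw [← mul_assoc, i2]
      · rw [← mul_assoc, h1]
    constructor
    · calc x ^ (n+1) * y ^ (n+1) * x ^ (n+1)
          = (x * x ^ n) * (y ^ n * y) * (x * x ^ n) := by
            rw [← pow_succ', ← pow_succ]
        _ = x * ((x ^ n * y ^ n) * (y * x)) * x ^ n := by simp only [mul_assoc]
        _ = (x * y * x) * (x ^ n * y ^ n * x ^ n) := by rw [hc]; simp only [mul_assoc]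
        _ = x ^ (n+1) := by rw [h1, i1, pow_succ']
    · calc y ^ (n+1) * x ^ (n+1) * y ^ (n+1)
          = (y * y ^ n) * (x ^ n * x) * (y * y ^ n) := by
            rw [← pow_succ', ← pow_succ]
        _ = y * ((y ^ n * x ^ n) * (x * y)) * y ^ n := by simp only [mul_assoc]
        _ = (y * x * y) * (y ^ n * x ^ n * y ^ n) := by rw [hc']; simp only [mul_assoc]
        _ = y ^ (n+1) := by rw [h2, i2, pow_succ']

/-- `depth l` is the maximum of the truncated differences `l[k] - k`. -/
def depth : List ℕ → ℕ
  | [] => 0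
  | i :: l => max i (depth l - 1)

theorem depth_le_iff (l : List ℕ) (j : ℕ) :
    depth l ≤ j ↔ ∀ k (h : k < l.length), l[k] ≤ k + j := by
  induction l generalizing j with
  | nil => simp [depth]
  | cons i l ih =>
    have : max i (depth l - 1) ≤ j ↔ i ≤ j ∧ depth l ≤ j + 1 := by omega
    rw [depth, this, ih]
    constructor
    · rintro ⟨h1, h2⟩ k hk
      cases k with
      | zero => simpa using h1
      | succ k =>
        have := h2 k (by simpa using hk)
        simp only [List.getElem_cons_succ]; omega
    · intro h
      refine ⟨(h 0 (by simp)).trans (Nat.zero_add j).le, fun k hk => ?_⟩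
      have := h (k+1) (by simpa using hk)
      simp only [List.getElem_cons_succ] at this; omega

theorem im_f_mul (hinv : IsInverseMonoid M) {x y : M} (h1 : x * y * x = x)
    (h2 : y * x * y = y) (p q : ℕ) :
    (y ^ p * x ^ p) * (y ^ q * x ^ q) = y ^ (max p q) * x ^ (max p q) := by
  have key : ∀ p q : ℕ, p ≤ q → (y ^ p * x ^ p) * (y ^ q * x ^ q) = y ^ q * x ^ q := by
    intro p q h
    obtain ⟨r, rfl⟩ := Nat.exists_eq_add_of_le h
    rw [pow_add y]
    calc _ = (y ^ p * x ^ p * y ^ p) * y ^ r * x ^ (p + r) := by simp only [mul_assoc]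
      _ = _ := by rw [(im_pow_inv hinv h1 h2 p).2]
  have idem : ∀ p, (y ^ p * x ^ p) * (y ^ p * x ^ p) = (y ^ p * x ^ p) := fun p => key p p le_rfl
  rcases le_total p q with h | h
  · rw [max_eq_right h, key p q h]
  · rw [max_eq_left h, im_idem_comm hinv (idem p) (idem q), key q p h]

theorem im_x_f (hinv : IsInverseMonoid M) {x y : M} (h1 : x * y * x = x)
    (h2 : y * x * y = y) (i : ℕ) :
    x * (y ^ i * x ^ i) = (y ^ (i - 1) * x ^ (i - 1)) * x := by
  cases i with
  | zero => simp
  | succ i =>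
    have hc : (x * y) * (y ^ i * x ^ i) = (y ^ i * x ^ i) * (x * y) := by
      apply im_idem_comm hinv
      · rw [← mul_assoc, h1]
      · rw [← mul_assoc, (im_pow_inv hinv h1 h2 i).2]
    simp only [Nat.add_sub_cancel]
    calc x * (y ^ (i+1) * x ^ (i+1)) = ((x * y) * (y ^ i * x ^ i)) * x := by
          rw [pow_succ', pow_succ]; simp only [mul_assoc]
      _ = (y ^ i * x ^ i) * (x * y * x) := by rw [hc]; simp only [mul_assoc]
      _ = _ := by rw [h1]

theorem im_prod (hinv : IsInverseMonoid M) {x y : M} (h1 : x * y * x = x)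
    (h2 : y * x * y = y) (l : List ℕ) :
    (l.map fun i => (y ^ i * x ^ i) * x).prod =
      (y ^ (depth l) * x ^ (depth l)) * x ^ l.length := by
  induction l with
  | nil => simp [depth]
  | cons i l ih =>
    rw [List.map_cons, List.prod_cons, ih, depth, List.length_cons]
    calc _ = (y ^ i * x ^ i) * (x * (y ^ depth l * x ^ depth l)) * x ^ l.length := by
          simp only [mul_assoc]
      _ = _ := by
        rw [im_x_f hinv h1 h2, ← mul_assoc (y ^ i * x ^ i), im_f_mul hinv h1 h2, pow_succ' x l.length]
        simp only [mul_assoc]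

theorem perm_exists_gt {n : ℕ} (σ : Equiv.Perm (Fin n)) (hσ : σ ≠ 1) :
    ∃ j, j < σ j ∧ ∀ i < j, σ i = i := by
  classical
  have hex : ∃ j, σ j ≠ j := by
    by_contra h
    push Not at h
    exact hσ (Equiv.ext h)
  obtain ⟨j, hj, hmin⟩ := (wellFounded_lt (α := Fin n)).has_min {j | σ j ≠ j} hex
  have hm : ∀ i < j, σ i = i := by
    intro i hi
    by_contra h
    exact hmin i h hi
  refine ⟨j, ?_, hm⟩
  rcases lt_trichotomy j (σ j) with h | h | h
  · exact h
  · exact absurd h.symm hj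
  · exact absurd (σ.injective (hm _ h)) hj

theorem im_f_stable (hinv : IsInverseMonoid M) {x y : M} (h1 : x * y * x = x)
    (h2 : y * x * y = y) {n : ℕ} (hn : NPermutable M n) :
    y ^ n * x ^ n = y ^ (n + n) * x ^ (n + n) := by
  obtain ⟨σ, hσ, hprod⟩ := hn (fun i => (y ^ (i : ℕ) * x ^ (i : ℕ)) * x)
  obtain ⟨j, hj, -⟩ := perm_exists_gt σ hσ
  have e1 : (List.ofFn fun i : Fin n => (y ^ (i : ℕ) * x ^ (i : ℕ)) * x)
      = (List.ofFn fun i : Fin n => (i : ℕ)).map fun i => (y ^ i * x ^ i) * x := by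
    rw [List.map_ofFn]; rfl
  have e2 : (List.ofFn fun i : Fin n => (y ^ (σ i : ℕ) * x ^ (σ i : ℕ)) * x)
      = (List.ofFn fun i : Fin n => (σ i : ℕ)).map fun i => (y ^ i * x ^ i) * x := by
    rw [List.map_ofFn]; rfl
  rw [e1, e2, im_prod hinv h1 h2, im_prod hinv h1 h2] at hprod
  simp only [List.length_ofFn] at hprod
  have d1 : depth (List.ofFn fun i : Fin n => (i : ℕ)) = 0 := by
    apply Nat.le_zero.1
    rw [depth_le_iff]
    intro k hk
    simp
  have d2 : 1 ≤ depth (List.ofFn fun i : Fin n => (σ i : ℕ)) := by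
    by_contra h
    have h0 : depth (List.ofFn fun i : Fin n => (σ i : ℕ)) ≤ 0 := by omega
    rw [depth_le_iff] at h0
    have := h0 j (by simp)
    simp at this
    exact absurd hj (not_lt.2 this)
  rw [d1] at hprod
  generalize depth (List.ofFn fun i : Fin n => (σ i : ℕ)) = p at *
  simp only [pow_zero, one_mul] at hprod
  have hx : (y * x) * x ^ n = x ^ n := by
    have := im_f_mul hinv h1 h2 1 p
    rw [max_eq_right d2, pow_one, pow_one] at this
    conv_lhs => rw [hprod]
    rw [← mul_assoc, this, ← hprod]
  have hs : ∀ k, y ^ n * x ^ n = y ^ (n + k) * x ^ (n + k) := by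
    intro k
    induction k with
    | zero => rfl
    | succ k ih =>
      have a : y ^ (n+1) * x ^ (n+1) = y ^ n * x ^ n := by
        rw [pow_succ, pow_succ']
        calc _ = y ^ n * ((y * x) * x ^ n) := by simp only [mul_assoc]
          _ = _ := by rw [hx]
      calc y ^ n * x ^ n = y ^ (n+1) * x ^ (n+1) := a.symm
        _ = y * (y ^ n * x ^ n) * x := by rw [pow_succ', pow_succ]; simp only [mul_assoc]
        _ = _ := by
          rw [ih, ← add_assoc, pow_succ' y (n+k), pow_succ x (n+k)]; simp only [mul_assoc]
  exact hs n

theorem im_group (hinv : IsInverseMonoid M) {z w : M} (h1 : z * w * z = z)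
    (h2 : w * z * w = w) (hf : w * z = w ^ 2 * z ^ 2) (he : z * w = z ^ 2 * w ^ 2) :
    z * w = w * z := by
  have hc : (z * w) * (w * z) = (w * z) * (z * w) := by
    apply im_idem_comm hinv
    · rw [← mul_assoc, h1]
    · rw [← mul_assoc, h2]
  have half : ∀ z w : M, z * w * z = z → z * w = z ^ 2 * w ^ 2 →
      (z * w) * (w * z) = (w * z) * (z * w) → w * z = (w * z) * (z * w) := by
    intro z w h1 he hc
    have : z * (z * w) = z := by
      calc z * (z * w) = (z * w * z) * (z * w) := by rw [h1]
        _ = z * ((w * z) * (z * w)) := by simp only [mul_assoc]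
        _ = z ^ 2 * w ^ 2 * z := by rw [← hc, pow_two, pow_two]; simp only [mul_assoc]
        _ = z := by rw [← he, h1]
    calc w * z = w * (z * (z * w)) := by rw [this]
      _ = _ := by simp only [mul_assoc]
  have a := half z w h1 he hc
  have b := half w z h2 hf hc.symm
  rw [b, hc, ← a]

theorem im_all_periodic (hinv : IsInverseMonoid M) (hperm : Permutable M)
    (H : ∀ S : Subsemigroup M, IsSubgroupOfMonoid S → SubsemigroupFG S →
        ∀ x ∈ S, IsPeriodicElem x) (x : M) : IsPeriodicElem x := by
  obtain ⟨n, hn2, hn⟩ := hperm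
  obtain ⟨y, ⟨h1, h2⟩, -⟩ := hinv x
  have hf := im_f_stable hinv h1 h2 hn
  have he := im_f_stable hinv h2 h1 hn
  obtain ⟨p1, p2⟩ := im_pow_inv hinv h1 h2 n
  have hg : x ^ n * y ^ n = y ^ n * x ^ n := by
    apply im_group hinv p1 p2
    · rw [hf, ← pow_mul, ← pow_mul, mul_two]
    · rw [he, ← pow_mul, ← pow_mul, mul_two]
  generalize hz : x ^ n = z at *
  generalize hw : y ^ n = w at *
  classical
  set S := Subsemigroup.closure ((({z, w} : Finset M)) : Set M) with hS
  have zS : z ∈ S := Subsemigroup.subset_closure (by simp)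
  have wS : w ∈ S := Subsemigroup.subset_closure (by simp)
  have hid : ∀ a ∈ S, (z * w) * a = a ∧ a * (z * w) = a := by
    intro a ha
    induction ha using Subsemigroup.closure_induction with
    | mem a ha =>
      simp only [Finset.coe_insert, Finset.coe_singleton, Set.mem_insert_iff,
        Set.mem_singleton_iff] at ha
      rcases ha with rfl | rfl
      · exact ⟨p1, by rw [hg, ← mul_assoc, p1]⟩
      · exact ⟨by rw [hg, p2], by rw [← mul_assoc, p2]⟩
    | mul a b _ _ ha hb => exact ⟨by rw [← mul_assoc, ha.1], by rw [mul_assoc, hb.2]⟩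
  have hgrp : IsSubgroupOfMonoid S := by
    refine ⟨z * w, S.mul_mem zS wS, hid, ?_⟩
    intro a ha
    induction ha using Subsemigroup.closure_induction with
    | mem a ha =>
      simp only [Finset.coe_insert, Finset.coe_singleton, Set.mem_insert_iff,
        Set.mem_singleton_iff] at ha
      rcases ha with rfl | rfl
      · exact ⟨w, wS, rfl, hg.symm⟩
      · exact ⟨z, zS, hg.symm, rfl⟩
    | mul a b hma hmb ha hb =>
      obtain ⟨a', ha', a1, a2⟩ := ha
      obtain ⟨b', hb', b1, b2⟩ := hb
      refine ⟨b' * a', S.mul_mem hb' ha', ?_, ?_⟩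
      · calc a * b * (b' * a') = a * (b * b') * a' := by simp only [mul_assoc]
          _ = z * w := by rw [b1, (hid a hma).2, a1]
      · calc b' * a' * (a * b) = b' * (a' * a) * b := by simp only [mul_assoc]
          _ = z * w := by rw [a2, (hid b' hb').2, b2]
  obtain ⟨i, j, hi, hij, h⟩ := H S hgrp ⟨{z, w}, rfl⟩ z zS
  refine ⟨n * i, n * j, ?_, ?_, ?_⟩
  · exact Nat.mul_pos (by omega) hi
  · exact Nat.mul_lt_mul_of_pos_left hij (by omega)
  · rw [pow_mul, pow_mul, hz, h]

end InvPart

section AutPart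

variable {α M : Type} [Monoid M]

theorem reaches_append {A : RatMonoidAutomaton α M} {q q' q'' : A.Q} {x y : List α} {m m' : M}
    (h : A.Reaches q x m q') (h' : A.Reaches q' y m' q'') :
    A.Reaches q (x ++ y) (m * m') q'' := by
  induction h with
  | refl q => simpa using h'
  | letter hs _ ih =>
    rw [mul_assoc]
    exact .letter hs (ih h')
  | eps hs _ ih =>
    rw [mul_assoc]
    exact .eps hs (ih h')

theorem reaches_split {A : RatMonoidAutomaton α M} {q q'' : A.Q} {w : List α} {m : M}
    (h : A.Reaches q w m q'') : ∀ x y : List α, w = x ++ y →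
    ∃ q' m1 m2, A.Reaches q x m1 q' ∧ A.Reaches q' y m2 q'' ∧ m = m1 * m2 := by
  induction h with
  | refl q =>
    intro x y hxy
    obtain ⟨rfl, rfl⟩ := List.nil_eq_append_iff.1 hxy
    exact ⟨q, 1, 1, .refl q, .refl q, by simp⟩
  | @letter q q' q'' a w m m' hs hr ih =>
    intro x y hxy
    cases x with
    | nil =>
      simp only [List.nil_append] at hxy
      subst hxy
      exact ⟨q, 1, _, .refl q, .letter hs hr, by simp⟩
    | cons b x =>
      simp only [List.cons_append, List.cons.injEq] at hxy
      obtain ⟨rfl, hxy⟩ := hxy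
      obtain ⟨r, m1, m2, hr1, hr2, rfl⟩ := ih x y hxy
      exact ⟨r, _, m2, .letter hs hr1, hr2, by rw [mul_assoc]⟩
  | eps hs hr ih =>
    intro x y hxy
    obtain ⟨r, m1, m2, hr1, hr2, rfl⟩ := ih x y hxy
    exact ⟨r, _, m2, .eps hs hr1, hr2, by rw [mul_assoc]⟩

theorem lang_regular_of_finite [Finite M] (A : RatMonoidAutomaton α M) : A.lang.IsRegular := by
  have := A.fintypeQ
  rw [Language.isRegular_iff_finite_range_leftQuotient]
  let R : List α → Set (A.Q × M) := fun x => {p | A.Reaches A.start x p.2 p.1}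
  let G : Set (A.Q × M) → Language α := fun P =>
    {y | ∃ p ∈ P, ∃ q ∈ A.accept, ∃ m, A.Reaches p.1 y m q ∧ ∃ x0 ∈ A.I0, x0 * (p.2 * m) ∈ A.I1}
  have : A.lang.leftQuotient = fun x => G (R x) := by
    funext x
    ext y
    constructor
    · rintro ⟨q, hq, m, hr, x0, hx0, h⟩
      obtain ⟨r, m1, m2, hr1, hr2, rfl⟩ := reaches_split hr x y rfl
      exact ⟨(r, m1), hr1, q, hq, m2, hr2, x0, hx0, h⟩
    · rintro ⟨p, hp, q, hq, m, hr, x0, hx0, h⟩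
      exact ⟨q, hq, _, reaches_append hp hr, x0, hx0, h⟩
  rw [this]
  exact (Set.toFinite (Set.range G)).subset (by rintro _ ⟨x, rfl⟩; exact ⟨R x, rfl⟩)

theorem regular_mem_LRat (L : Language α) (h : L.IsRegular) : L ∈ LRat α M := by
  obtain ⟨σ, hσ, D, rfl⟩ := h
  let A : RatMonoidAutomaton α M :=
    { Q := σ
      fintypeQ := hσ
      start := D.start
      accept := D.accept
      step := fun q o => match o with
        | some a => {(D.step q a, 1)}
        | none => ∅
      I0 := {1}
      I1 := {1}
      ratI0 := .of_finite _ (Set.finite_singleton _)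
      ratI1 := .of_finite _ (Set.finite_singleton _) }
  have h1 : ∀ (q : A.Q) (w : List α) (m : M) (q' : A.Q), A.Reaches q w m q' →
      m = 1 ∧ q' = D.evalFrom q w := by
    intro q w m q' h
    induction h with
    | refl q => exact ⟨rfl, rfl⟩
    | letter hs _ ih =>
      have hs' := Prod.mk.inj (Set.mem_singleton_iff.1 hs)
      obtain ⟨rfl, rfl⟩ := hs'
      exact ⟨by rw [ih.1, mul_one], ih.2⟩
    | eps hs _ _ => exact absurd hs (Set.notMem_empty _)
  have h2 : ∀ (w : List α) (q : σ), A.Reaches q w 1 (D.evalFrom q w) := by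
    intro w
    induction w with
    | nil => intro q; exact .refl (A := A) q
    | cons a w ih =>
      intro q
      have := RatMonoidAutomaton.Reaches.letter (A := A) (q := q) (a := a)
        (Set.mem_singleton (D.step q a, (1 : M))) (ih (D.step q a))
      rw [mul_one] at this
      exact this
  refine ⟨A, ?_⟩
  ext w
  constructor
  · rintro ⟨q, hq, m, hr, -⟩
    have := (h1 _ _ _ _ hr).2
    subst this
    exact hq
  · intro hw
    exact ⟨_, hw, 1, h2 w _, 1, rfl, by simp; rfl⟩

theorem subsemi_pow_mem (S : Subsemigroup M) {x : M} (hx : x ∈ S) (i : ℕ) (hi : 0 < i) :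
    x ^ i ∈ S := by
  obtain ⟨j, rfl⟩ := Nat.exists_eq_add_of_lt hi
  rw [zero_add]
  induction j with
  | zero => simpa using hx
  | succ j ih => rw [pow_succ]; exact S.mul_mem (ih (by omega)) hx

theorem periodic_of_regular
    (H : ∀ (α : Type) (L : Language α), L ∈ LRat α M ↔ L.IsRegular)
    (S : Subsemigroup M) (hS : IsSubgroupOfMonoid S) (x : M) (hx : x ∈ S) :
    IsPeriodicElem x := by
  obtain ⟨e, heS, hid, hinv⟩ := hS
  obtain ⟨y, hy, hxy, hyx⟩ := hinv x hx
  have hee : e * e = e := (hid e heS).1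
  let A : RatMonoidAutomaton M M :=
    { Q := Unit
      fintypeQ := inferInstance
      start := ()
      accept := Set.univ
      step := fun _ o => match o with
        | some a => {((), a)}
        | none => ∅
      I0 := {e}
      I1 := {e}
      ratI0 := .of_finite _ (Set.finite_singleton _)
      ratI1 := .of_finite _ (Set.finite_singleton _) }
  have h1 : ∀ (q : A.Q) (w : List M) (m : M) (q' : A.Q), A.Reaches q w m q' → m = w.prod := by
    intro q w m q' h
    induction h with
    | refl q => rfl
    | letter hs _ ih =>
      have hs' := Prod.mk.inj (Set.mem_singleton_iff.1 hs)
      rw [ih, List.prod_cons, hs'.2]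
    | eps hs _ _ => exact absurd hs (Set.notMem_empty _)
  have h2 : ∀ (w : List M), A.Reaches () w w.prod () := by
    intro w
    induction w with
    | nil => exact .refl (A := A) ()
    | cons a w ih =>
      rw [List.prod_cons]
      exact RatMonoidAutomaton.Reaches.letter (A := A) (q := ()) (a := a)
        (Set.mem_singleton ((), a)) ih
  have hl : ∀ w : List M, w ∈ A.lang ↔ e * w.prod = e := by
    intro w
    constructor
    · rintro ⟨q, -, m, hr, x0, hx0, h⟩
      rw [h1 _ _ _ _ hr] at h
      rw [Set.mem_singleton_iff.1 hx0] at h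
      exact h
    · intro h
      exact ⟨(), trivial, w.prod, h2 w, e, rfl, h⟩
  have hreg : A.lang.IsRegular := (H M _).1 ⟨A, rfl⟩
  rw [Language.isRegular_iff_finite_range_leftQuotient] at hreg
  have hni : ¬ Function.Injective (fun i : ℕ => A.lang.leftQuotient [x ^ (i + 1)]) := by
    intro hinj
    exact Set.infinite_range_of_injective hinj
      (hreg.subset (by rintro _ ⟨i, rfl⟩; exact ⟨_, rfl⟩))
  have hpow : ∀ i, e * (x ^ i * y ^ i) = e := by
    intro i
    induction i with
    | zero => simp
    | succ i ih =>
      calc e * (x ^ (i+1) * y ^ (i+1)) = e * x ^ i * ((x * y) * y ^ i) := by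
            rw [pow_succ, pow_succ']; simp only [mul_assoc]
        _ = e := by
          rw [hxy]
          cases i with
          | zero => simp [hee]
          | succ i =>
            have : y ^ (i+1) ∈ S := subsemi_pow_mem S hy _ (by omega)
            rw [(hid _ this).1, mul_assoc, ih]
  have hpow' : ∀ i, e * (y ^ i * x ^ i) = e := by
    intro i
    induction i with
    | zero => simp
    | succ i ih =>
      calc e * (y ^ (i+1) * x ^ (i+1)) = e * y ^ i * ((y * x) * x ^ i) := by
            rw [pow_succ, pow_succ']; simp only [mul_assoc]
        _ = e := by
          rw [hyx]
          cases i with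
          | zero => simp [hee]
          | succ i =>
            have : x ^ (i+1) ∈ S := subsemi_pow_mem S hx _ (by omega)
            rw [(hid _ this).1, mul_assoc, ih]
  have key : ∀ i j : ℕ, A.lang.leftQuotient [x ^ (i + 1)] = A.lang.leftQuotient [x ^ (j + 1)] →
      x ^ (i + 1) = x ^ (j + 1) := by
    intro i j h
    have hm : [y ^ (i+1)] ∈ A.lang.leftQuotient [x ^ (i + 1)] :=
      (hl _).2 (by simpa using hpow (i+1))
    rw [h] at hm
    have hm' := (hl _).1 hm
    simp only [List.cons_append, List.nil_append, List.prod_cons, List.prod_nil, mul_one] at hm'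
    have mi : x ^ (i+1) ∈ S := subsemi_pow_mem S hx _ (by omega)
    have mj : x ^ (j+1) ∈ S := subsemi_pow_mem S hx _ (by omega)
    have my : y ^ (i+1) * x ^ (i+1) ∈ S :=
      S.mul_mem (subsemi_pow_mem S hy _ (by omega)) mi
    calc x ^ (i+1) = e * x ^ (i+1) := ((hid _ mi).1).symm
      _ = e * (x ^ (j+1) * y ^ (i+1)) * x ^ (i+1) := by rw [hm']
      _ = (e * x ^ (j+1)) * (y ^ (i+1) * x ^ (i+1)) := by simp only [mul_assoc]
      _ = x ^ (j+1) * (e * (y ^ (i+1) * x ^ (i+1))) := by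
          rw [(hid _ mj).1, (hid _ my).1]
      _ = x ^ (j+1) := by rw [hpow', (hid _ mj).2]
  simp only [Function.Injective] at hni
  push Not at hni
  obtain ⟨i, j, hij, hne⟩ := hni
  have := key i j hij
  rcases lt_or_gt_of_ne hne with h | h
  · exact ⟨i + 1, j + 1, by omega, by omega, this⟩
  · exact ⟨j + 1, i + 1, by omega, by omega, this.symm⟩

end AutPart

section WordPart

/-- Closed under factors and containing words of every length. -/
def BigFactorial {A : Type} (F : Set (List A)) : Prop :=
  (∀ w ∈ F, ∀ v, v <:+: w → v ∈ F) ∧ ∀ n, ∃ w ∈ F, w.length = n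

theorem exists_minimal_factorial {A : Type} [Finite A] (F : Set (List A)) (hF : BigFactorial F) :
    ∃ F0 ⊆ F, BigFactorial F0 ∧ ∀ G ⊆ F0, BigFactorial G → G = F0 := by
  obtain ⟨m, hm, hmin⟩ := zorn_superset_nonempty {G : Set (List A) | BigFactorial G} (by
    intro c hc hchain hne
    refine ⟨⋂₀ c, ⟨?_, ?_⟩, fun s hs => Set.sInter_subset_of_mem hs⟩
    · intro w hw v hv G hG
      exact (hc hG).1 w (hw G hG) v hv
    · intro n
      by_contra hcon
      push Not at hcon
      have hfin : {w : List A | w.length = n}.Finite := List.finite_length_eq A n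
      have : ∀ w ∈ {w : List A | w.length = n}, ∃ G ∈ c, w ∉ G := by
        intro w hw
        by_contra h
        push Not at h
        exact hcon w h hw
      choose! g hg hgw using this
      -- a chain has a member below any finite family
      have hlow : ∀ T : Set (List A), T.Finite → T ⊆ {w : List A | w.length = n} →
          ∃ G ∈ c, ∀ w ∈ T, G ⊆ g w := by
        intro T hT
        induction T, hT using Set.Finite.induction_on with
        | empty => intro _; exact ⟨hne.some, hne.some_mem, by simp⟩
        | @insert a T _ _ ih =>
          intro hsub
          obtain ⟨G, hG, hGT⟩ := ih ((Set.subset_insert _ _).trans hsub)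
          have ha := hg a (hsub (Set.mem_insert _ _))
          rcases hchain.total hG ha with h | h
          · refine ⟨G, hG, ?_⟩
            rintro w (rfl | hw)
            · exact h
            · exact hGT w hw
          · refine ⟨g a, ha, ?_⟩
            rintro w (rfl | hw)
            · exact subset_rfl
            · exact h.trans (hGT w hw)
      obtain ⟨G, hG, hGT⟩ := hlow _ hfin subset_rfl
      obtain ⟨w, hw, hwn⟩ := (hc hG).2 n
      exact hgw w hwn (hGT w hwn hw)) F hF
  exact ⟨m, hm, hmin.1, fun G hG hGb => Set.Subset.antisymm hG (hmin.2 hGb hG)⟩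

/-- The factor of the infinite word `s` of length `l` at position `i`. -/
def blk {A : Type} (s : ℕ → A) (i l : ℕ) : List A := (List.range l).map fun j => s (i + j)

theorem blk_length {A : Type} (s : ℕ → A) (i l : ℕ) : (blk s i l).length = l := by simp [blk]

theorem blk_add {A : Type} (s : ℕ → A) (i l l' : ℕ) :
    blk s i (l + l') = blk s i l ++ blk s (i + l) l' := by
  simp [blk, List.range_add, Function.comp_def, add_assoc]

theorem blk_factor {A : Type} (s : ℕ → A) (i l N : ℕ) (h : i + l ≤ N) :
    blk s i l <:+: blk s 0 N := by
  obtain ⟨r, rfl⟩ := Nat.exists_eq_add_of_le h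
  refine ⟨blk s 0 i, blk s (i + l) r, ?_⟩
  rw [blk_add, blk_add, zero_add, zero_add]

theorem blk_one {A : Type} (s : ℕ → A) (i : ℕ) : blk s i 1 = [s i] := by simp [blk]

theorem blk_congr {A : Type} (s : ℕ → A) (i i' l : ℕ) (h : ∀ j < l, s (i + j) = s (i' + j)) :
    blk s i l = blk s i' l := by
  simp only [blk]
  apply List.map_congr_left
  intro j hj
  exact h j (List.mem_range.1 hj)

theorem blk_eq_iff {A : Type} (s : ℕ → A) (i i' l : ℕ) (h : blk s i l = blk s i' l) :
    ∀ j < l, s (i + j) = s (i' + j) := by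
  intro j hj
  have := congrArg (fun w : List A => w[j]?) h
  simpa [blk, hj] using this

/-- A minimal recurrent infinite word in a big factorial language. -/
theorem exists_min_recurrent {A : Type} [Finite A] [LinearOrder A] (F : Set (List A))
    (hF : BigFactorial F) :
    ∃ s : ℕ → A, (∀ i l, blk s i l ∈ F) ∧
      (∀ i d, (∀ j < d, s (i + j) = s j) → s d ≤ s (i + d)) ∧
      (∀ L, ∃ i, 1 ≤ i ∧ ∀ j < L, s (i + j) = s j) := by
  obtain ⟨F0, hsub, ⟨hfac, hbig⟩, hmin⟩ := exists_minimal_factorial F hF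
  have hrec : ∀ w ∈ F0, ∃ B, ∀ v ∈ F0, v.length = B → w <:+: v := by
    intro w hw
    by_contra hcon
    push Not at hcon
    have hG : BigFactorial {v ∈ F0 | ¬ w <:+: v} := by
      refine ⟨?_, ?_⟩
      · rintro v ⟨hv, hwv⟩ u hu
        exact ⟨hfac v hv u hu, fun h => hwv (h.trans hu)⟩
      · intro n
        obtain ⟨v, hv, hvn, hwv⟩ := hcon n
        exact ⟨v, ⟨hv, hwv⟩, hvn⟩
    have := hmin _ (Set.sep_subset _ _) hG
    rw [← this] at hw
    exact hw.2 (List.infix_refl w)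
  have hext : ∀ w ∈ F0, ∃ a, w ++ [a] ∈ F0 ∧ ∀ c, w ++ [c] ∈ F0 → a ≤ c := by
    intro w hw
    obtain ⟨B, hB⟩ := hrec w hw
    obtain ⟨z, hz, hzl⟩ := hbig (B + 1)
    obtain ⟨z', a, rfl⟩ : ∃ z' a, z = z' ++ [a] := by
      rcases List.eq_nil_or_concat z with h | ⟨z', a, h⟩
      · simp [h] at hzl
      · exact ⟨z', a, by simpa using h⟩
    have hz' : z' ∈ F0 := hfac _ hz _ ⟨[], [a], by simp⟩
    obtain ⟨p, q, hpq⟩ := hB z' hz' (by simpa using hzl)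
    have hne : {c | w ++ [c] ∈ F0}.Nonempty := by
      cases q with
      | nil => exact ⟨a, hfac _ hz _ ⟨p, [], by simp [← hpq]⟩⟩
      | cons b q => exact ⟨b, hfac _ hz _ ⟨p, q ++ [a], by simp [← hpq]⟩⟩
    obtain ⟨b, hb, hbm⟩ := Set.exists_min_image _ id (Set.toFinite {c | w ++ [c] ∈ F0}) hne
    exact ⟨b, hb, hbm⟩
  have hnil : [] ∈ F0 := by
    obtain ⟨w, hw, _⟩ := hbig 0
    exact hfac w hw _ (List.nil_infix)
  have : Nonempty A := by
    obtain ⟨a, _⟩ := hext [] hnil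
    exact ⟨a⟩
  choose! a ha hamin using hext
  let m : ℕ → List A := fun n => Nat.rec [] (fun _ w => w ++ [a w]) n
  have hm : ∀ n, m n ∈ F0 := by
    intro n
    induction n with
    | zero => exact hnil
    | succ n ih => exact ha _ ih
  let s : ℕ → A := fun n => a (m n)
  have hms : ∀ n, m n = blk s 0 n := by
    intro n
    induction n with
    | zero => rfl
    | succ n ih =>
      rw [blk_add, ← ih, blk_one, zero_add]
  have hF0 : ∀ i l, blk s i l ∈ F0 := by
    intro i l
    exact hfac _ (hms (i + l) ▸ hm (i + l)) _ (blk_factor s i l _ le_rfl)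
  refine ⟨s, fun i l => hsub (hF0 i l), ?_, ?_⟩
  · intro i d h
    have h1 := hF0 i (d + 1)
    rw [blk_add, blk_one, blk_congr s i 0 d (by simpa using h), ← hms] at h1
    exact hamin _ (hm d) _ h1
  · intro L
    obtain ⟨B, hB⟩ := hrec _ (hF0 0 L)
    obtain ⟨p, q, hpq⟩ := hB _ (hF0 1 B) (blk_length _ _ _)
    have hlen : B = p.length + (L + q.length) := by
      have := congrArg List.length hpq
      simp [blk_length] at this
      omega
    rw [hlen, blk_add, blk_add, List.append_assoc] at hpq
    have h1 := (List.append_inj hpq (by rw [blk_length])).2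
    have h2 := (List.append_inj h1 (by rw [blk_length, blk_length])).1
    refine ⟨1 + p.length, by omega, ?_⟩
    simpa using blk_eq_iff s _ _ L h2.symm

/-- Strict lexicographic comparison witnessed at a common position. -/
def LexLt {A : Type} [LT A] (v w : List A) : Prop :=
  ∃ p c c' r r', c < c' ∧ v = p ++ c :: r ∧ w = p ++ c' :: r'

theorem LexLt.ctx {A : Type} [LT A] {v w : List A} (h : LexLt v w) (x y y' : List A) :
    LexLt (x ++ v ++ y) (x ++ w ++ y') := by
  obtain ⟨p, c, c', r, r', hc, rfl, rfl⟩ := h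
  exact ⟨x ++ p, c, c', r ++ y, r' ++ y', hc, by simp, by simp⟩

theorem LexLt.lt {A : Type} [LinearOrder A] {v w : List A} (h : LexLt v w) : v < w := by
  obtain ⟨p, c, c', r, r', hc, rfl, rfl⟩ := h
  induction p with
  | nil => exact List.Lex.rel hc
  | cons a p ih => exact List.Lex.cons ih

/-- The positions used for the decomposition in the aperiodic case. -/
theorem exists_positions {A : Type} [LinearOrder A] (s : ℕ → A)
    (h1 : ∀ i d, (∀ j < d, s (i + j) = s j) → s d ≤ s (i + d))
    (h2 : ∀ L, ∃ i, 1 ≤ i ∧ ∀ j < L, s (i + j) = s j)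
    (h3 : ∀ i, 1 ≤ i → ∃ j, s (i + j) ≠ s j) :
    ∃ i d : ℕ → ℕ, (∀ k, i k + d k < i (k + 1)) ∧ (∀ k, d k < d (k + 1)) ∧
      (∀ k, ∀ j < d k, s (i k + j) = s j) ∧ ∀ k, s (d k) < s (i k + d k) := by
  classical
  have hd : ∀ i, 1 ≤ i → ∃ d, (∀ j < d, s (i + j) = s j) ∧ s d < s (i + d) := by
    intro i hi
    have hex := h3 i hi
    have hlt : ∀ j < Nat.find hex, s (i + j) = s j := fun j hj => by
      simpa using Nat.find_min hex hj
    exact ⟨Nat.find hex, hlt, lt_of_le_of_ne (h1 i _ hlt) (Ne.symm (Nat.find_spec hex))⟩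
  choose! D hD1 hD2 using hd
  have hnext : ∀ i, 1 ≤ i → ∃ i', 1 ≤ i' ∧ i + D i < i' ∧ D i < D i' := by
    intro i hi
    obtain ⟨i', hi', hagree⟩ := h2 (((Finset.range (i + D i + 1)).sup D) + 1)
    have hDbig : ∀ k ∈ Finset.range (i + D i + 1), D k < D i' := by
      intro k hk
      have hle : D k ≤ (Finset.range (i + D i + 1)).sup D := Finset.le_sup hk
      by_contra hcon
      have := hD2 i' hi'
      rw [hagree (D i') (by omega)] at this
      exact lt_irrefl _ this
    refine ⟨i', hi', ?_, hDbig i (Finset.mem_range.2 (by omega))⟩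
    by_contra hcon
    exact lt_irrefl _ (hDbig i' (by simp; omega))
  choose! nx hn1 hn2 hn3 using hnext
  let I : ℕ → ℕ := fun n => Nat.rec 1 (fun _ i => nx i) n
  have hI : ∀ n, 1 ≤ I n := by
    intro n
    induction n with
    | zero => exact le_rfl
    | succ n ih => exact hn1 _ ih
  exact ⟨I, fun k => D (I k), fun k => hn2 _ (hI k), fun k => hn3 _ (hI k),
    fun k => hD1 _ (hI k), fun k => hD2 _ (hI k)⟩

variable {M : Type} [Monoid M]

/-- Evaluation of a word. -/
def wev {A : Type} (g : A → M) (w : List A) : M := (w.map g).prod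

theorem wev_append {A : Type} (g : A → M) (v w : List A) :
    wev g (v ++ w) = wev g v * wev g w := by simp [wev]

/-- Reduced words: no shorter, and no lexicographically smaller, representative. -/
def Reduced {A : Type} [LT A] (g : A → M) (w : List A) : Prop :=
  ∀ v, wev g v = wev g w → w.length ≤ v.length ∧ (v.length = w.length → ¬ LexLt v w)

theorem Reduced.factor {A : Type} [LT A] {g : A → M} {w v : List A} (h : Reduced g w)
    (hv : v <:+: w) : Reduced g v := by
  obtain ⟨p, q, rfl⟩ := hv
  intro u hu
  have := h (p ++ u ++ q) (by simp only [wev_append, hu])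
  constructor
  · have := this.1
    simp at this
    omega
  · intro hl hlt
    exact this.2 (by simp [hl]) (hlt.ctx p q q)

theorem exists_reduced {A : Type} [Finite A] [LinearOrder A] (g : A → M) (w : List A) :
    ∃ v, wev g v = wev g w ∧ Reduced g v := by
  classical
  have hex : ∃ n, ∃ v : List A, v.length = n ∧ wev g v = wev g w := ⟨_, w, rfl, rfl⟩
  have hfin : {v : List A | v.length = Nat.find hex ∧ wev g v = wev g w}.Finite :=
    (List.finite_length_eq A (Nat.find hex)).subset (fun v hv => hv.1)
  obtain ⟨v, ⟨hv1, hv2⟩, hmin⟩ := Set.exists_min_image _ id hfin (Nat.find_spec hex)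
  refine ⟨v, hv2, fun u hu => ⟨?_, ?_⟩⟩
  · rw [hv1]
    exact Nat.find_min' hex ⟨u, rfl, hu.trans hv2⟩
  · intro hl hlt
    exact absurd hlt.lt (not_lt.2 (hmin u ⟨hl.trans hv1, hu.trans hv2⟩))

theorem wev_flatten_ofFn {A : Type} (g : A → M) {n : ℕ} (u : Fin n → List A) :
    wev g (List.ofFn u).flatten = (List.ofFn fun i => wev g (u i)).prod := by
  simp only [wev, List.map_flatten, List.prod_flatten, List.map_ofFn]
  rfl

theorem blk_flatten {A : Type} (s : ℕ → A) (i : ℕ → ℕ) (hi : ∀ k, i k ≤ i (k + 1)) (n : ℕ) :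
    (List.ofFn fun k : Fin n => blk s (i k) (i (k + 1) - i k)).flatten
      = blk s (i 0) (i n - i 0) := by
  induction n with
  | zero => simp [blk]
  | succ n ih =>
    rw [List.ofFn_succ', List.concat_eq_append, List.flatten_append]
    simp only [Fin.val_castSucc, Fin.val_last]
    rw [ih]
    have h0 : i 0 ≤ i n := monotone_nat_of_le_succ hi (Nat.zero_le n)
    have h1 := hi n
    have e : i (n + 1) - i 0 = (i n - i 0) + (i (n + 1) - i n) := by omega
    rw [e, blk_add, Nat.add_sub_cancel' h0]
    simp

theorem lexLt_perm {A : Type} [LT A] {n : ℕ} (u : Fin n → List A)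
    (hu : ∀ j k, j < k → LexLt (u k) (u j)) (σ : Equiv.Perm (Fin n)) (hσ : σ ≠ 1) :
    LexLt (List.ofFn fun i => u (σ i)).flatten (List.ofFn u).flatten := by
  obtain ⟨j, hj, hfix⟩ := perm_exists_gt σ hσ
  have split : ∀ f : Fin n → List A, List.ofFn f =
      (List.ofFn f).take j ++ f j :: (List.ofFn f).drop (j + 1) := by
    intro f
    have h := List.getElem_cons_drop (as := List.ofFn f) (i := j) (h := by simp)
    rw [List.getElem_ofFn] at h
    conv_lhs => rw [← List.take_append_drop j (List.ofFn f), ← h]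
  have htake : (List.ofFn fun i => u (σ i)).take j = (List.ofFn u).take j := by
    apply List.ext_getElem
    · simp
    · intro k hk1 hk2
      simp only [List.getElem_take, List.getElem_ofFn]
      have hk : k < j := by simp at hk1; omega
      rw [hfix ⟨k, hk.trans j.2⟩ hk]
  rw [split (fun i => u (σ i)), split u, htake]
  simp only [List.flatten_append, List.flatten_cons, ← List.append_assoc]
  exact (hu j (σ j) hj).ctx _ _ _

theorem finite_of_periodic_permutable (hfg : Monoid.FG M) (hperm : Permutable M)
    (hper : ∀ x : M, IsPeriodicElem x) : Finite M := by
  obtain ⟨n, -, hn⟩ := hperm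
  obtain ⟨T, hT⟩ := hfg.fg_top
  let A := Fin T.card
  let g : A → M := fun i => (T.equivFin.symm i : M)
  have hsurj : ∀ x : M, ∃ w : List A, wev g w = x := by
    intro x
    have hx : x ∈ Submonoid.closure (T : Set M) := by rw [hT]; trivial
    induction hx using Submonoid.closure_induction with
    | mem x hx => exact ⟨[T.equivFin ⟨x, hx⟩], by simp [wev, g]⟩
    | one => exact ⟨[], rfl⟩
    | mul x y _ _ hx hy =>
      obtain ⟨v, rfl⟩ := hx
      obtain ⟨w, rfl⟩ := hy
      exact ⟨v ++ w, wev_append g v w⟩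
  by_cases hbig : ∀ N, ∃ w : List A, Reduced g w ∧ w.length = N
  swap
  · push Not at hbig
    obtain ⟨N, hN⟩ := hbig
    have hlt : ∀ w : List A, Reduced g w → w.length < N := by
      intro w hw
      by_contra h
      exact hN (w.take N) (hw.factor (List.take_prefix N w).isInfix) (by simp; omega)
    have hfin : {w : List A | w.length < N}.Finite := List.finite_length_lt A N
    have : (Set.univ : Set M).Finite := by
      refine (hfin.image (wev g)).subset ?_
      intro x _
      obtain ⟨w, rfl⟩ := hsurj x
      obtain ⟨v, hv, hr⟩ := exists_reduced g w
      exact ⟨v, hlt v hr, hv⟩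
    exact Set.finite_univ_iff.1 this
  exfalso
  obtain ⟨s, hs, h1, h2⟩ := exists_min_recurrent {w : List A | Reduced g w}
    ⟨fun w hw v hv => Reduced.factor hw hv, hbig⟩
  by_cases h3 : ∀ i, 1 ≤ i → ∃ j, s (i + j) ≠ s j
  · obtain ⟨i, d, hi, hd, hag, hlt⟩ := exists_positions s h1 h2 h3
    have hdm : StrictMono d := strictMono_nat_of_lt_succ hd
    let u : Fin n → List A := fun k => blk s (i k) (i (k + 1) - i k)
    -- shape of the blocks
    have hshape : ∀ (k l : ℕ), l ≤ d k → ∃ r, blk s (i k) (i (k + 1) - i k) =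
        blk s 0 l ++ s (i k + l) :: r := by
      intro k l hl
      have := hi k
      have e : i (k + 1) - i k = l + (1 + (i (k + 1) - i k - l - 1)) := by omega
      rw [e, blk_add, blk_add, blk_one,
        blk_congr s (i k) 0 l (fun j hj => by rw [hag k j (by omega), zero_add])]
      exact ⟨_, rfl⟩
    have hu : ∀ j k, j < k → LexLt (u k) (u j) := by
      intro j k hjk
      have hdjk : d j < d k := hdm hjk
      obtain ⟨r, hr⟩ := hshape k (d j) hdjk.le
      obtain ⟨r', hr'⟩ := hshape j (d j) le_rfl
      exact ⟨_, _, _, r, r', by rw [hag k _ hdjk]; exact hlt j, hr, hr'⟩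
    obtain ⟨σ, hσ, hprod⟩ := hn (fun k => wev g (u k))
    have hred : Reduced g (List.ofFn u).flatten := by
      have := blk_flatten s i (fun k => by have := hi k; omega) n
      rw [show (List.ofFn u).flatten = _ from this]
      exact hs _ _
    have hl := lexLt_perm u hu σ hσ
    refine (hred (List.ofFn fun i => u (σ i)).flatten ?_).2 ?_ hl
    · rw [wev_flatten_ofFn, wev_flatten_ofFn, ← hprod]
    · have hp : (List.ofFn fun i => u (σ i)).Perm (List.ofFn u) := Equiv.Perm.ofFn_comp_perm σ u
      exact hp.flatten.length_eq
  · push Not at h3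
    obtain ⟨i, hi, hper'⟩ := h3
    have hp : ∀ k, blk s (k * i) i = blk s 0 i := by
      intro k
      induction k with
      | zero => simp
      | succ k ih =>
        rw [← ih]
        apply blk_congr
        intro j _
        rw [show (k + 1) * i + j = i + (k * i + j) by ring, hper']
    have hev : ∀ k, wev g (blk s 0 (k * i)) = wev g (blk s 0 i) ^ k := by
      intro k
      induction k with
      | zero => simp [blk, wev]
      | succ k ih =>
        rw [Nat.succ_mul, blk_add, wev_append, ih, zero_add, hp, pow_succ]
    obtain ⟨a, b, -, hab, h⟩ := hper (wev g (blk s 0 i))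
    have := (hs 0 (b * i) (blk s 0 (a * i)) (by rw [hev, hev, h])).1
    rw [blk_length, blk_length] at this
    exact absurd this (not_le.2 (Nat.mul_lt_mul_of_pos_right hab hi))

end WordPart

/-- Let `M` be a finitely generated inverse permutable monoid. Then
`𝔏_Rat(M)` equals the class of regular languages (over every alphabet) if and only if
every finitely generated subgroup of `M` is periodic. -/
theorem LRat_eq_regular_iff_fg_subgroups_periodic
    (M : Type) [Monoid M] (hfg : Monoid.FG M) (hinv : IsInverseMonoid M)
    (hperm : Permutable M) :
    (∀ (α : Type) (L : Language α), L ∈ LRat α M ↔ L.IsRegular) ↔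
      (∀ S : Subsemigroup M, IsSubgroupOfMonoid S → SubsemigroupFG S →
        ∀ x ∈ S, IsPeriodicElem x) := by
  constructor
  · intro H S hS _ x hx
    exact periodic_of_regular H S hS x hx
  · intro H α L
    have := finite_of_periodic_permutable hfg hperm (im_all_periodic hinv hperm H)
    constructor
    · rintro ⟨A, rfl⟩
      exact lang_regular_of_finite A
    · exact regular_mem_LRat L
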